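/- Let r ≥ 2 and 1 < n_1 ≤ … ≤ n_r be integers, and let k ∈ ℕ₀. Then for each s ∈ [0, r−2], and additionally for s = r−1 in case n_{r−1} ≠ n_r, one has SD_k(C_{n_1} ⊕ … ⊕ C_{n_r}) ≥ Σ_{i=1}^{s} (n_i − 1) + SD_{k+s}(C_{n_{s+1}} ⊕ … ⊕ C_{n_r}). Moreover, if k + r > 2, then SD_k(C_{n_1} ⊕ … ⊕ C_{n_r}) ≥ Σ_{i=1}^{r−1} (n_i − 1) + SD_{k+r−2}(C_{n_r}). -/

import Mathlib

open Multiset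

/-- A sequence (finite multiset) over `G` is zero-sumfree if every nonempty
subsequence has nonzero sum. -/
def IsZeroSumfree {G : Type*} [AddCommMonoid G] (S : Multiset G) : Prop :=
  ∀ T ≤ S, T ≠ 0 → T.sum ≠ 0

/-- A minimal zero-sum sequence: a nonempty sequence with sum zero all of whose
nonempty proper subsequences have nonzero sum. -/
def IsMinimalZeroSum {G : Type*} [AddCommMonoid G] (S : Multiset G) : Prop :=
  S ≠ 0 ∧ S.sum = 0 ∧ ∀ T ≤ S, T ≠ 0 → T ≠ S → T.sum ≠ 0

/-- The cumulated multiplicity of level `ℓ` of a sequence: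
`cm_ℓ(S) = Σ_{g ∈ G} max {0, v_g(S) − ℓ}`. -/
noncomputable def cmul {G : Type*} [AddCommMonoid G] (ℓ : ℕ) (S : Multiset G) : ℕ :=
  letI := Classical.decEq G
  ∑ g ∈ S.toFinset, (S.count g - ℓ)

/-- `SD_{(k,ℓ)}(G)`: the maximum length of a minimal zero-sum sequence `S` over `G`
with `cm_ℓ(S) ≤ k`. -/
noncomputable def SDpair (G : Type*) [AddCommMonoid G] (k ℓ : ℕ) : ℕ :=
  sSup {m | ∃ S : Multiset G, IsMinimalZeroSum S ∧ cmul ℓ S ≤ k ∧ Multiset.card S = m}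

/-- `SD_k(G)`: the `k`-th Strong Davenport constant. -/
noncomputable def SDk (G : Type*) [AddCommMonoid G] (k : ℕ) : ℕ := SDpair G k 1

/-- The Strong Davenport constant `SD(G) = SD_0(G)`. -/
noncomputable def SD (G : Type*) [AddCommMonoid G] : ℕ := SDk G 0

/-- The Olson constant `Ol(G) = SD_1(G)`. -/
noncomputable def Ol (G : Type*) [AddCommMonoid G] : ℕ := SDk G 1

/-- `ol_k(G)`: the maximum length of a zero-sumfree sequence `S` over `G` with
`cm(S) ≤ k`. -/
noncomputable def olk (G : Type*) [AddCommMonoid G] (k : ℕ) : ℕ :=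
  sSup {m | ∃ S : Multiset G, IsZeroSumfree S ∧ cmul 1 S ≤ k ∧ Multiset.card S = m}

/-- `Ol_k(G)`: the smallest integer `ℓ` such that every sequence `S` over `G` with
`cm(S) ≤ k` and `|S| ≥ ℓ` has a nonempty zero-sum subsequence. -/
noncomputable def Olk (G : Type*) [AddCommMonoid G] (k : ℕ) : ℕ :=
  sInf {m | ∀ S : Multiset G, cmul 1 S ≤ k → m ≤ Multiset.card S →
    ∃ T, T ≤ S ∧ T ≠ 0 ∧ T.sum = 0}

/-- The Davenport constant `D(G)`: the maximum length of a minimal zero-sum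
sequence over `G`. -/
noncomputable def DavenportD (G : Type*) [AddCommMonoid G] : ℕ :=
  sSup {m | ∃ S : Multiset G, IsMinimalZeroSum S ∧ Multiset.card S = m}

/-!
Let `H` be the sum of the components of larger order and `S` a longest minimal zero-sum sequence
over `H`. Replace one term `g` of `S`, a repeated one if possible so that `cm` drops by one, by
`m` terms `(1, h₁), …, (1, hₘ)` of `C_m ⊕ H` with `h₁ + ⋯ + hₘ = g`. Looking at the first
coordinate, a zero-sum subsequence contains all or none of the new terms, so the new sequence is
again a minimal zero-sum sequence, and it is longer by `m - 1`.

The `hᵢ` can be chosen distinct as soon as `H` contains an `m`-element set `A` that no nonzero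
translation preserves: some `a ∈ A` then has `a + d ∉ A` for the required correction `d ≠ 0` of
the sum. Arithmetic progressions are such sets if `H` has an element of order larger than `m`;
otherwise take `m - 1 ≥ 2` elements of a proper subgroup and one element outside it; for `m = 2`,
`g = 0 + g` will do. If only `m ≤ |H|` is known, `m - 1` distinct elements and one correcting
term give `cm ≤ 1`.
-/

section CumulatedMultiplicity

variable {G H : Type*} [AddCommMonoid G] [AddCommMonoid H] {ℓ : ℕ}

lemma cmul_eq_sum_toFinset [DecidableEq G] (ℓ : ℕ) (S : Multiset G) :
    cmul ℓ S = ∑ g ∈ S.toFinset, (S.count g - ℓ) := by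
  unfold cmul
  congr!

lemma cmul_eq_zero_iff [DecidableEq G] {S : Multiset G} :
    cmul ℓ S = 0 ↔ ∀ g, S.count g ≤ ℓ := by
  simp only [cmul_eq_sum_toFinset, Finset.sum_eq_zero_iff, mem_toFinset, Nat.sub_eq_zero_iff_le]
  refine forall_congr' fun g => ⟨fun h => ?_, fun h _ => h⟩
  by_cases hg : g ∈ S
  · exact h hg
  · simp [hg]

lemma cmul_one_eq_zero_of_nodup {S : Multiset G} (hS : S.Nodup) : cmul 1 S = 0 := by
  classical
  exact cmul_eq_zero_iff.2 (nodup_iff_count_le_one.1 hS)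

lemma cmul_singleton (hℓ : ℓ ≠ 0) (g : G) : cmul ℓ ({g} : Multiset G) = 0 := by
  classical
  refine cmul_eq_zero_iff.2 fun x => ?_
  exact (nodup_iff_count_le_one.1 (nodup_singleton g) x).trans (Nat.one_le_iff_ne_zero.2 hℓ)

lemma cmul_cons [DecidableEq G] (ℓ : ℕ) (g : G) (S : Multiset G) :
    cmul ℓ (g ::ₘ S) = cmul ℓ S + if ℓ ≤ S.count g then 1 else 0 := by
  have extend_sum : cmul ℓ S = ∑ x ∈ insert g S.toFinset, (S.count x - ℓ) := by
    rw [cmul_eq_sum_toFinset]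
    refine Finset.sum_subset (Finset.subset_insert _ _) fun x _ hx => ?_
    simp [count_eq_zero_of_notMem (mt mem_toFinset.2 hx)]
  have single_term : (if ℓ ≤ S.count g then 1 else 0) =
      ∑ x ∈ insert g S.toFinset, if x = g then (if ℓ ≤ S.count g then 1 else 0) else 0 := by
    simp
  rw [cmul_eq_sum_toFinset, toFinset_cons, extend_sum, single_term, ← Finset.sum_add_distrib]
  refine Finset.sum_congr rfl fun x _ => ?_
  rw [count_cons]
  split_ifs <;> subst_vars <;> omega

lemma cmul_le_cmul_cons (ℓ : ℕ) (g : G) (S : Multiset G) : cmul ℓ S ≤ cmul ℓ (g ::ₘ S) := by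
  classical
  exact cmul_cons ℓ g S ▸ Nat.le_add_right _ _

lemma cmul_cons_le (ℓ : ℕ) (g : G) (S : Multiset G) : cmul ℓ (g ::ₘ S) ≤ cmul ℓ S + 1 := by
  classical
  rw [cmul_cons]
  split_ifs <;> omega

lemma cmul_add_of_disjoint {S T : Multiset G} (hST : Disjoint S T) :
    cmul ℓ (S + T) = cmul ℓ S + cmul ℓ T := by
  classical
  induction S using Multiset.induction with
  | empty => simp [cmul]
  | cons g S ih =>
    obtain ⟨hg, hST⟩ := disjoint_cons_left.1 hST
    rw [cons_add, cmul_cons, cmul_cons, ih hST, count_add, count_eq_zero_of_notMem hg,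
      add_zero, add_right_comm]

lemma cmul_map_of_injective {f : G → H} (hf : Function.Injective f) (S : Multiset G) :
    cmul ℓ (S.map f) = cmul ℓ S := by
  classical
  induction S using Multiset.induction with
  | empty => simp [cmul]
  | cons g S ih => rw [map_cons, cmul_cons, cmul_cons, ih, count_map_eq_count' f S hf]

lemma exists_mem_cmul_erase_le [DecidableEq G] {S : Multiset G} {k : ℕ} (hS : S ≠ 0)
    (hk : cmul ℓ S ≤ k + 1) : ∃ g ∈ S, cmul ℓ (S.erase g) ≤ k := by
  by_cases h : ∃ g, ℓ < S.count g
  · obtain ⟨g, hg⟩ := h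
    have hgS : g ∈ S := count_pos.1 (by omega)
    refine ⟨g, hgS, ?_⟩
    rw [← cons_erase hgS, cmul_cons, count_erase_self, if_pos (by omega)] at hk
    omega
  · push Not at h
    obtain ⟨g, hg⟩ := exists_mem_of_ne_zero hS
    refine ⟨g, hg, ?_⟩
    calc cmul ℓ (S.erase g) ≤ cmul ℓ (g ::ₘ S.erase g) := cmul_le_cmul_cons ..
      _ = 0 := by rw [cons_erase hg, cmul_eq_zero_iff.2 h]
      _ ≤ k := Nat.zero_le k

lemma card_le_cmul_add_mul_card [Finite G] (ℓ : ℕ) (S : Multiset G) :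
    S.card ≤ cmul ℓ S + Nat.card G * ℓ := by
  classical
  have := Fintype.ofFinite G
  calc S.card = ∑ g ∈ S.toFinset, S.count g := (toFinset_sum_count_eq S).symm
    _ ≤ ∑ g ∈ S.toFinset, ((S.count g - ℓ) + ℓ) := Finset.sum_le_sum fun _ _ => by omega
    _ = cmul ℓ S + S.toFinset.card * ℓ := by
      rw [Finset.sum_add_distrib, cmul_eq_sum_toFinset, Finset.sum_const, smul_eq_mul]
    _ ≤ cmul ℓ S + Nat.card G * ℓ := by
      rw [Nat.card_eq_fintype_card]
      gcongr
      exact Finset.card_le_univ _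

end CumulatedMultiplicity

section MinimalZeroSum

lemma exists_le_map_eq_of_le_map {α β : Type*} {f : α → β} {S : Multiset α} {T : Multiset β}
    (hT : T ≤ S.map f) : ∃ U ≤ S, U.map f = T := by
  induction S using Quotient.inductionOn
  induction T using Quotient.inductionOn
  obtain ⟨l, hlT, hlS⟩ := hT
  obtain ⟨l', hl'S, rfl⟩ := List.sublist_map_iff.1 hlS
  exact ⟨l', hl'S.subperm, Quotient.sound hlT⟩

lemma isMinimalZeroSum_singleton_zero (G : Type*) [AddCommMonoid G] :
    IsMinimalZeroSum ({0} : Multiset G) := by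
  refine ⟨singleton_ne_zero 0, sum_singleton 0, fun T hT hT0 hT1 => ?_⟩
  rcases le_singleton.1 hT with h | h <;> contradiction

variable {G H Q : Type*} [AddCommGroup G] [AddCommGroup H] [AddCommGroup Q]

lemma isMinimalZeroSum_pair_neg {g : G} (hg : g ≠ 0) :
    IsMinimalZeroSum ({g, -g} : Multiset G) := by
  refine ⟨by simp, by simp, fun T hT hT0 hT1 => ?_⟩
  have hlt : T.card < 2 := by simpa using card_lt_card (lt_of_le_of_ne hT hT1)
  have hpos : 0 < T.card := card_pos.2 hT0
  obtain ⟨x, rfl⟩ := card_eq_one.1 (show T.card = 1 by omega)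
  have hx : x = g ∨ x = -g := by simpa using mem_of_le hT (mem_singleton_self x)
  rcases hx with rfl | rfl <;> simpa using hg

lemma IsMinimalZeroSum.ne_zero_of_mem {S : Multiset G} (hS : IsMinimalZeroSum S)
    (hcard : 2 ≤ S.card) {g : G} (hg : g ∈ S) : g ≠ 0 := by
  rintro rfl
  refine hS.2.2 {0} (singleton_le.2 hg) (singleton_ne_zero 0) ?_ (sum_singleton 0)
  rintro rfl
  simp at hcard

lemma IsMinimalZeroSum.map {S : Multiset G} (hS : IsMinimalZeroSum S) (f : G →+ H)
    (hf : Function.Injective f) : IsMinimalZeroSum (S.map f) := by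
  obtain ⟨hS0, hsum, hmin⟩ := hS
  refine ⟨by simpa using hS0, by rw [← map_multiset_sum, hsum, _root_.map_zero], ?_⟩
  intro T hT hT0 hTS hTsum
  obtain ⟨U, hUS, rfl⟩ := exists_le_map_eq_of_le_map hT
  refine hmin U hUS (by simpa using hT0) (fun h => hTS (by rw [h])) (hf ?_)
  rw [map_multiset_sum, hTsum, _root_.map_zero]

/-- Adding up `φ`-values shows that a zero-sum subsequence contains all of `U` or none of it. -/
lemma IsMinimalZeroSum.erase_add [DecidableEq G] {S U : Multiset G} (hS : IsMinimalZeroSum S)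
    (φ : G →+ Q) (q : Q) (hφS : ∀ x ∈ S, φ x = 0) (hφU : ∀ x ∈ U, φ x = q)
    (hU : U ≠ 0) (hUcard : U.card = addOrderOf q) (hsum : U.sum ∈ S) :
    IsMinimalZeroSum (S.erase U.sum + U) := by
  obtain ⟨-, hSsum, hmin⟩ := hS
  have hsum_erase : U.sum + (S.erase U.sum).sum = 0 := by
    rw [← sum_cons, cons_erase hsum, hSsum]
  refine ⟨by simp [hU], by rw [sum_add, add_comm, hsum_erase], fun T hT hT0 hTne hTsum => ?_⟩
  obtain ⟨A, B, hA, hB, rfl⟩ : ∃ A B, A ≤ S.erase U.sum ∧ B ≤ U ∧ A + B = T :=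
    ⟨T ∩ S.erase U.sum, T - S.erase U.sum, inter_le_right, tsub_le_iff_left.2 hT,
      by rw [add_comm, sub_add_inter]⟩
  have hφA : φ A.sum = 0 := by
    rw [map_multiset_sum]
    refine sum_eq_zero fun y hy => ?_
    obtain ⟨x, hx, rfl⟩ := mem_map.1 hy
    exact hφS x (mem_of_mem_erase (mem_of_le hA hx))
  have hφB : φ B.sum = B.card • q := by
    rw [map_multiset_sum, map_congr rfl fun x hx => hφU x (mem_of_le hB hx), map_const',
      sum_replicate]
  have hφT : φ A.sum + φ B.sum = 0 := by
    rw [← _root_.map_add, ← sum_add, hTsum, _root_.map_zero]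
  have hdvd : U.card ∣ B.card := by
    rw [hUcard, addOrderOf_dvd_iff_nsmul_eq_zero, ← hφB]
    simpa only [hφA, zero_add] using hφT
  rcases B.card.eq_zero_or_pos with hB0 | hBpos
  · obtain rfl := card_eq_zero.1 hB0
    have hlt : A < S := hA.trans_lt (erase_lt.2 hsum)
    exact hmin A hlt.le (by simpa using hT0) hlt.ne (by simpa using hTsum)
  · obtain rfl : B = U := eq_of_le_of_card_le hB (Nat.le_of_dvd hBpos hdvd)
    have hle : B.sum ::ₘ A ≤ S := cons_erase hsum ▸ cons_le_cons _ hA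
    refine hmin (B.sum ::ₘ A) hle cons_ne_zero (fun h => hTne ?_) ?_
    · rw [← h, erase_cons_head]
    · rw [sum_cons, add_comm, ← sum_add, hTsum]

end MinimalZeroSum

section SDpair

variable {G H : Type*} [AddCommGroup G] [AddCommGroup H] {k ℓ : ℕ}

lemma bddAbove_card_isMinimalZeroSum (G : Type*) [AddCommGroup G] [Finite G] (k ℓ : ℕ) :
    BddAbove {m | ∃ S : Multiset G, IsMinimalZeroSum S ∧ cmul ℓ S ≤ k ∧ S.card = m} := by
  refine ⟨k + Nat.card G * ℓ, ?_⟩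
  rintro _ ⟨S, -, hk, rfl⟩
  exact (card_le_cmul_add_mul_card ℓ S).trans (Nat.add_le_add_right hk _)

lemma IsMinimalZeroSum.card_le_SDpair [Finite G] {S : Multiset G} (hS : IsMinimalZeroSum S)
    (hk : cmul ℓ S ≤ k) : S.card ≤ SDpair G k ℓ :=
  le_csSup (bddAbove_card_isMinimalZeroSum G k ℓ) ⟨S, hS, hk, rfl⟩

lemma exists_isMinimalZeroSum_card_eq_SDpair (G : Type*) [AddCommGroup G] [Finite G] (k : ℕ)
    (hℓ : ℓ ≠ 0) :
    ∃ S : Multiset G, IsMinimalZeroSum S ∧ cmul ℓ S ≤ k ∧ S.card = SDpair G k ℓ :=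
  Nat.sSup_mem (s := {m | ∃ S : Multiset G, IsMinimalZeroSum S ∧ cmul ℓ S ≤ k ∧ S.card = m})
    ⟨1, {0}, isMinimalZeroSum_singleton_zero G, by simp [cmul_singleton hℓ], card_singleton 0⟩
    (bddAbove_card_isMinimalZeroSum G k ℓ)

lemma two_le_SDpair [Finite G] [Nontrivial G] (hk : k ≠ 0) (hℓ : ℓ ≠ 0) : 2 ≤ SDpair G k ℓ := by
  obtain ⟨g, hg⟩ := exists_ne (0 : G)
  have hcmul : cmul ℓ ({g, -g} : Multiset G) ≤ k := by
    have := cmul_cons_le ℓ g {-g}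
    rw [cmul_singleton hℓ] at this
    exact this.trans (Nat.one_le_iff_ne_zero.2 hk)
  exact (isMinimalZeroSum_pair_neg hg).card_le_SDpair hcmul

lemma SDpair_le_of_injective [Finite H] (f : G →+ H) (hf : Function.Injective f) (k ℓ : ℕ) :
    SDpair G k ℓ ≤ SDpair H k ℓ := by
  refine csSup_le' ?_
  rintro _ ⟨S, hS, hk, rfl⟩
  rw [← card_map f]
  exact (hS.map f hf).card_le_SDpair (by rwa [cmul_map_of_injective hf])

/-- Every nonzero element of `H` is the sum of a sequence `U` of length `m` with `cm_ℓ(U) ≤ c`.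
This is what is needed to replace a term of a minimal zero-sum sequence over `H` by `m` terms
outside `H` at the cost of raising `cm_ℓ` by at most `c`. -/
def NonzeroRepresentable (H : Type*) [AddCommMonoid H] (m ℓ c : ℕ) : Prop :=
  ∀ g : H, g ≠ 0 → ∃ U : Multiset H, U.card = m ∧ U.sum = g ∧ cmul ℓ U ≤ c

lemma sum_map_prodMk (g : G) (U : Multiset H) :
    (U.map (Prod.mk g)).sum = (U.card • g, U.sum) := by
  induction U using Multiset.induction with
  | empty => simp [Prod.ext_iff]
  | cons x U ih => simp [ih, add_nsmul, add_comm]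

lemma IsMinimalZeroSum.replace_in_prod [DecidableEq H] {S U : Multiset H}
    (hS : IsMinimalZeroSum S) (hU : U ≠ 0) (hsum : U.sum ∈ S) :
    IsMinimalZeroSum ((S.erase U.sum).map (AddMonoidHom.inr (ZMod U.card) H) +
      U.map (Prod.mk (1 : ZMod U.card))) := by
  classical
  have inr_injective : Function.Injective (AddMonoidHom.inr (ZMod U.card) H) :=
    Prod.mk_right_injective 0
  have sum_lift : (U.map (Prod.mk (1 : ZMod U.card))).sum = AddMonoidHom.inr _ H U.sum := by
    simp [sum_map_prodMk]
  have hmin := (hS.map _ inr_injective).erase_add (U := U.map (Prod.mk (1 : ZMod U.card)))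
    (AddMonoidHom.fst (ZMod U.card) H) 1 (by simp) (by simp) (by simpa using hU)
    (by rw [card_map, ZMod.addOrderOf_one]) (by rw [sum_lift]; exact mem_map_of_mem _ hsum)
  rwa [sum_lift, ← map_erase _ inr_injective] at hmin

lemma sub_one_add_SDpair_le_SDpair_prod [Finite H] [Nontrivial H] {m c : ℕ} (hm : 1 < m)
    (hℓ : ℓ ≠ 0) (hH : NonzeroRepresentable H m ℓ c) (k : ℕ) :
    m - 1 + SDpair H (k + 1) ℓ ≤ SDpair (ZMod m × H) (k + c) ℓ := by
  classical
  have : NeZero m := ⟨by omega⟩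
  have : Fact (1 < m) := ⟨hm⟩
  obtain ⟨S, hS, hcmul, hcard⟩ := exists_isMinimalZeroSum_card_eq_SDpair H (k + 1) hℓ
  have two_le_card : 2 ≤ S.card := hcard ▸ two_le_SDpair k.succ_ne_zero hℓ
  obtain ⟨g, hg, herase⟩ := exists_mem_cmul_erase_le hS.1 hcmul
  obtain ⟨U, rfl, rfl, hUcmul⟩ := hH g (hS.ne_zero_of_mem two_le_card hg)
  have hU : U ≠ 0 := card_pos.1 (by omega)
  have hdisj : Disjoint ((S.erase U.sum).map (AddMonoidHom.inr (ZMod U.card) H))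
      (U.map (Prod.mk 1)) :=
    disjoint_map_map.2 fun _ _ _ _ h => zero_ne_one (congrArg Prod.fst h)
  have hle := (hS.replace_in_prod hU hg).card_le_SDpair (k := k + c) (ℓ := ℓ) (by
    rw [cmul_add_of_disjoint hdisj, cmul_map_of_injective (Prod.mk_right_injective 1),
      cmul_map_of_injective (f := AddMonoidHom.inr (ZMod U.card) H) (Prod.mk_right_injective 0)]
    exact add_le_add herase hUcmul)
  rw [card_add, card_map, card_map, card_erase_of_mem hg, hcard, Nat.pred_eq_sub_one] at hle
  omega

end SDpair

section SumsOfDistinctElements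

variable {H : Type*} [AddCommGroup H] {m : ℕ}

/-- A finite set is aperiodic if no nonzero translation maps it into itself, that is, if its
stabilizer under translation is trivial. -/
def IsAperiodic (A : Finset H) : Prop :=
  ∀ d : H, d ≠ 0 → ∃ a ∈ A, a + d ∉ A

/-- Exchanging a single element `a` for `a + d` changes the sum by the prescribed `d`. -/
lemma IsAperiodic.exists_card_eq_sum_eq {A : Finset H} (hA : IsAperiodic A) (g : H) :
    ∃ B : Finset H, B.card = A.card ∧ ∑ x ∈ B, x = g := by
  classical
  by_cases hd : g - ∑ x ∈ A, x = 0
  · exact ⟨A, rfl, (sub_eq_zero.1 hd).symm⟩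
  · obtain ⟨a, ha, had⟩ := hA _ hd
    have hnotMem : a + (g - ∑ x ∈ A, x) ∉ A.erase a := fun h => had (Finset.mem_of_mem_erase h)
    refine ⟨insert (a + (g - ∑ x ∈ A, x)) (A.erase a), ?_, ?_⟩
    · rw [Finset.card_insert_of_notMem hnotMem, Finset.card_erase_add_one ha]
    · rw [Finset.sum_insert hnotMem, Finset.sum_erase_eq_sub ha]
      abel

lemma isAperiodic_image_nsmul_range [DecidableEq H] {e : H} (hm : 0 < m)
    (he : m < addOrderOf e) : IsAperiodic ((Finset.range m).image (· • e)) := by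
  intro d hd
  by_contra! hperiod
  simp only [Finset.mem_image, Finset.mem_range, forall_exists_index, and_imp,
    forall_apply_eq_imp_iff₂] at hperiod
  obtain ⟨j, hjm, hj⟩ := hperiod 0 hm
  obtain rfl : j • e = d := by simpa using hj
  have hj0 : j ≠ 0 := by
    rintro rfl
    simp at hd
  obtain ⟨i, him, hi⟩ := hperiod (m - j) (by omega)
  rw [← add_nsmul, Nat.sub_add_cancel hjm.le] at hi
  exact him.ne (nsmul_injOn_Iio_addOrderOf (him.trans he) he hi)

lemma isAperiodic_insert_of_subset_addSubgroup [DecidableEq H] {L : AddSubgroup H}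
    {B : Finset H} (hBL : ∀ b ∈ B, b ∈ L) (hB : 1 < B.card) {x : H} (hx : x ∉ L) :
    IsAperiodic (insert x B) := by
  intro d hd
  by_cases hdL : d ∈ L
  · refine ⟨x, Finset.mem_insert_self x B, fun h => ?_⟩
    rcases Finset.mem_insert.1 h with h | h
    · exact hd (by simpa using h)
    · exact hx ((L.add_mem_cancel_right hdL).1 (hBL _ h))
  · obtain ⟨b, hb, hbd⟩ := Finset.exists_mem_ne hB (x - d)
    refine ⟨b, Finset.mem_insert_of_mem hb, fun h => ?_⟩
    rcases Finset.mem_insert.1 h with h | h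
    · exact hbd (eq_sub_of_add_eq h)
    · exact hdL ((L.add_mem_cancel_left (hBL b hb)).1 (hBL _ h))

lemma exists_finset_subset_card_eq_of_le_natCard {α : Type*} {s : Set α}
    (hs : m ≤ Nat.card s) : ∃ B : Finset α, ↑B ⊆ s ∧ B.card = m := by
  rcases m.eq_zero_or_pos with rfl | hm
  · exact ⟨∅, by simp⟩
  have hfin : s.Finite := Set.finite_coe_iff.1 (Nat.finite_of_card_ne_zero (by omega))
  rw [Nat.card_eq_card_finite_toFinset hfin] at hs
  obtain ⟨B, hBs, hB⟩ := Finset.exists_subset_card_eq hs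
  exact ⟨B, fun b hb => hfin.mem_toFinset.1 (hBs hb), hB⟩

lemma nonzeroRepresentable_of_exists_finset
    (h : ∀ g : H, g ≠ 0 → ∃ A : Finset H, A.card = m ∧ ∑ x ∈ A, x = g) :
    NonzeroRepresentable H m 1 0 := by
  intro g hg
  obtain ⟨A, hcard, hsum⟩ := h g hg
  exact ⟨A.val, hcard, by simpa using hsum, (cmul_one_eq_zero_of_nodup A.nodup).le⟩

lemma nonzeroRepresentable_of_lt_addOrderOf {e : H} (hm : 0 < m) (he : m < addOrderOf e) :
    NonzeroRepresentable H m 1 0 := by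
  classical
  refine nonzeroRepresentable_of_exists_finset fun g _ => ?_
  obtain ⟨A, hcard, hsum⟩ := (isAperiodic_image_nsmul_range hm he).exists_card_eq_sum_eq g
  refine ⟨A, ?_, hsum⟩
  rw [hcard, Finset.card_image_of_injOn, Finset.card_range]
  exact nsmul_injOn_Iio_addOrderOf.mono fun i hi => (Finset.mem_range.1 hi).trans he

lemma nonzeroRepresentable_of_addSubgroup_ne_top {L : AddSubgroup H} (hL : L ≠ ⊤) (hm : 1 < m)
    (hmL : m ≤ Nat.card L + 1) : NonzeroRepresentable H m 1 0 := by
  classical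
  refine nonzeroRepresentable_of_exists_finset fun g hg => ?_
  obtain rfl | hm : 2 = m ∨ 2 < m := eq_or_lt_of_le (Nat.succ_le_of_lt hm)
  · exact ⟨{0, g}, Finset.card_pair hg.symm, by simp [Finset.sum_pair hg.symm]⟩
  obtain ⟨x, hx⟩ : ∃ x, x ∉ L := by
    simpa [AddSubgroup.eq_top_iff'] using hL
  obtain ⟨B, hBL, hB⟩ := exists_finset_subset_card_eq_of_le_natCard (s := (L : Set H))
    (Nat.sub_le_iff_le_add.2 hmL)
  obtain ⟨A, hcard, hsum⟩ :=
    (isAperiodic_insert_of_subset_addSubgroup hBL (by omega) hx).exists_card_eq_sum_eq g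
  refine ⟨A, ?_, hsum⟩
  rw [hcard, Finset.card_insert_of_notMem fun h => hx (hBL h), hB, Nat.sub_add_cancel (by omega)]

lemma nonzeroRepresentable_one_of_le_natCard (hm : 0 < m) (hmH : m ≤ Nat.card H + 1) :
    NonzeroRepresentable H m 1 1 := by
  intro g _
  obtain ⟨B, -, hB⟩ := exists_finset_subset_card_eq_of_le_natCard (s := (Set.univ : Set H))
    (m := m - 1) (by rw [Nat.card_univ]; omega)
  refine ⟨(g - ∑ x ∈ B, x) ::ₘ B.val, ?_, by simp, ?_⟩
  · rw [card_cons, Finset.card_val, hB, Nat.sub_add_cancel hm]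
  · simpa [cmul_one_eq_zero_of_nodup B.nodup] using cmul_cons_le 1 (g - ∑ x ∈ B, x) B.val

end SumsOfDistinctElements

section CyclicComponents

variable {ι : Type*} {n : ι → ℕ} {m : ℕ}

lemma nonzeroRepresentable_pi_of_lt (j : ι) (hm : 0 < m) (hj : m < n j) :
    NonzeroRepresentable (∀ i, ZMod (n i)) m 1 0 := by
  classical
  refine nonzeroRepresentable_of_lt_addOrderOf
    (e := AddMonoidHom.single (fun i => ZMod (n i)) j 1) hm ?_
  rwa [addOrderOf_injective _ (Pi.single_injective (M := fun i => ZMod (n i)) j),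
    ZMod.addOrderOf_one]

lemma nonzeroRepresentable_pi_of_le {j j' : ι} (hjj' : j ≠ j') (hj' : 1 < n j') (hm : 1 < m)
    (hj : m ≤ n j) : NonzeroRepresentable (∀ i, ZMod (n i)) m 1 0 := by
  classical
  have : Fact (1 < n j') := ⟨hj'⟩
  let inclusion := AddMonoidHom.single (fun i => ZMod (n i)) j
  refine nonzeroRepresentable_of_addSubgroup_ne_top (L := inclusion.range) ?_ hm ?_
  · intro htop
    obtain ⟨x, hx⟩ : Pi.single j' 1 ∈ inclusion.range := htop ▸ AddSubgroup.mem_top _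
    simpa [inclusion, Pi.single_eq_of_ne' hjj'] using congrFun hx j'
  · have inclusion_injective : Function.Injective inclusion :=
      Pi.single_injective (M := fun i => ZMod (n i)) j
    rw [← Nat.card_congr (AddMonoidHom.ofInjective inclusion_injective).toEquiv, Nat.card_zmod]
    exact Nat.le_succ_of_le hj

lemma nonzeroRepresentable_one_pi_of_le [Finite (∀ i, ZMod (n i))] (j : ι) (hm : 0 < m)
    (hj : m ≤ n j) : NonzeroRepresentable (∀ i, ZMod (n i)) m 1 1 := by
  classical
  refine nonzeroRepresentable_one_of_le_natCard hm (Nat.le_succ_of_le (hj.trans ?_))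
  rw [← Nat.card_zmod (n j)]
  exact Nat.card_le_card_of_injective _ (Pi.single_injective (M := fun i => ZMod (n i)) j)

end CyclicComponents

section TailSum

/-- The direct sum `C_{n_s} ⊕ ⋯ ⊕ C_{n_{r-1}}`, with zero-based indices; it is trivial for
`r ≤ s`. The orders form an infinite sequence so that passing from `s` to `s + 1` needs no
reindexing of `n`. -/
abbrev TailSum (n : ℕ → ℕ) (s r : ℕ) : Type :=
  ∀ i : Fin (r - s), ZMod (n (s + i))

variable {n : ℕ → ℕ} {r s k : ℕ}

lemma finite_tailSum (hn : ∀ i, 1 < n i) (s r : ℕ) : Finite (TailSum n s r) := by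
  have : ∀ i, NeZero (n i) := fun i => ⟨Nat.ne_zero_of_lt (hn i)⟩
  infer_instance

lemma SDk_tailSum_zero (n : ℕ → ℕ) (r k : ℕ) :
    SDk (TailSum n 0 r) k = SDk (∀ i : Fin r, ZMod (n i)) k := by
  have reindex : (fun i : Fin r => n (0 + i)) = fun i : Fin r => n i := by simp
  exact congrArg (fun f : Fin r → ℕ => SDk (∀ i, ZMod (f i)) k) reindex

lemma SDk_zmod_le_SDk_tailSum (hn : ∀ i, 1 < n i) (hs : s < r) (k : ℕ) :
    SDk (ZMod (n s)) k ≤ SDk (TailSum n s r) k := by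
  have := finite_tailSum hn s r
  exact SDpair_le_of_injective
    (AddMonoidHom.single (fun i : Fin (r - s) => ZMod (n (s + i))) ⟨0, by omega⟩)
    (Pi.single_injective (M := fun i : Fin (r - s) => ZMod (n (s + i))) _) k 1

lemma SDk_zmod_prod_pi_succ_le {t : ℕ} (f : Fin (t + 1) → ℕ) [Finite (∀ i, ZMod (f i))]
    (k : ℕ) : SDk (ZMod (f 0) × ∀ i : Fin t, ZMod (f i.succ)) k ≤ SDk (∀ i, ZMod (f i)) k :=
  SDpair_le_of_injective (Fin.consLinearEquiv ℤ fun i => ZMod (f i)).toAddMonoidHom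
    (Fin.consLinearEquiv ℤ fun i => ZMod (f i)).injective k 1

lemma SDk_zmod_prod_tailSum_le (hn : ∀ i, 1 < n i) (hs : s < r) (k : ℕ) :
    SDk (ZMod (n s) × TailSum n (s + 1) r) k ≤ SDk (TailSum n s r) k := by
  obtain ⟨t, rfl⟩ : ∃ t, r = s + 1 + t := Nat.exists_eq_add_of_le hs
  have := finite_tailSum hn s (s + 1 + t)
  unfold TailSum at this ⊢
  rw [show s + 1 + t - s = t + 1 by omega] at this ⊢
  rw [show s + 1 + t - (s + 1) = t by omega]
  have reindex : (fun i : Fin t => n (s + 1 + i)) = fun i : Fin t => n (s + i.succ) := by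
    ext i
    rw [Fin.val_succ, add_right_comm, add_assoc]
  calc SDk (ZMod (n s) × ∀ i : Fin t, ZMod (n (s + 1 + i))) k
      = SDk (ZMod (n s) × ∀ i : Fin t, ZMod (n (s + i.succ))) k :=
        congrArg (fun f : Fin t → ℕ => SDk (ZMod (n s) × ∀ i, ZMod (f i)) k) reindex
    _ ≤ SDk (∀ i : Fin (t + 1), ZMod (n (s + i))) k :=
        SDk_zmod_prod_pi_succ_le (fun i : Fin (t + 1) => n (s + i)) k

lemma sub_one_add_SDk_tailSum_le {c : ℕ} (hn : ∀ i, 1 < n i) (hs : s + 1 < r)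
    (hrep : NonzeroRepresentable (TailSum n (s + 1) r) (n s) 1 c) (k : ℕ) :
    n s - 1 + SDk (TailSum n (s + 1) r) (k + 1) ≤ SDk (TailSum n s r) (k + c) := by
  have := finite_tailSum hn (s + 1) r
  have : ∀ i, Fact (1 < n i) := fun i => ⟨hn i⟩
  have : Nontrivial (TailSum n (s + 1) r) := Pi.nontrivial_at ⟨0, by omega⟩
  exact (sub_one_add_SDpair_le_SDpair_prod (hn s) one_ne_zero hrep k).trans
    (SDk_zmod_prod_tailSum_le hn (by omega) (k + c))

lemma sum_sub_one_add_SDk_tailSum_le (hn : ∀ i, 1 < n i) (hs : s < r)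
    (hrep : ∀ i < s, NonzeroRepresentable (TailSum n (i + 1) r) (n i) 1 0) (k : ℕ) :
    ∑ i ∈ Finset.range s, (n i - 1) + SDk (TailSum n s r) (k + s) ≤
      SDk (∀ i : Fin r, ZMod (n i)) k := by
  induction s with
  | zero => simp [SDk_tailSum_zero]
  | succ s ih =>
    have hstep := sub_one_add_SDk_tailSum_le hn hs (hrep s s.lt_succ_self) (k + s)
    calc ∑ i ∈ Finset.range (s + 1), (n i - 1) + SDk (TailSum n (s + 1) r) (k + (s + 1))
        = ∑ i ∈ Finset.range s, (n i - 1) +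
            (n s - 1 + SDk (TailSum n (s + 1) r) (k + s + 1)) := by
          rw [Finset.sum_range_succ, add_assoc, add_assoc]
      _ ≤ ∑ i ∈ Finset.range s, (n i - 1) + SDk (TailSum n s r) (k + s) := by gcongr; exact hstep
      _ ≤ SDk (∀ i : Fin r, ZMod (n i)) k :=
        ih (by omega) fun i hi => hrep i (hi.trans s.lt_succ_self)

lemma nonzeroRepresentable_tailSum_succ (hn : ∀ i, 1 < n i) (hmono : Monotone n)
    (hs : s + 2 < r ∨ s + 1 < r ∧ n s < n (s + 1)) :
    NonzeroRepresentable (TailSum n (s + 1) r) (n s) 1 0 := by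
  rcases hs with hs | ⟨hs, hlt⟩
  · exact nonzeroRepresentable_pi_of_le (j := (⟨0, by omega⟩ : Fin (r - (s + 1))))
      (j' := ⟨1, by omega⟩) (by simp) (hn _) (hn s) (hmono s.le_succ)
  · exact nonzeroRepresentable_pi_of_lt (⟨0, by omega⟩ : Fin (r - (s + 1)))
      (Nat.zero_lt_of_lt (hn s)) hlt

lemma nonzeroRepresentable_one_tailSum_succ (hn : ∀ i, 1 < n i) (hmono : Monotone n)
    (hs : s + 1 < r) : NonzeroRepresentable (TailSum n (s + 1) r) (n s) 1 1 := by
  have := finite_tailSum hn (s + 1) r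
  exact nonzeroRepresentable_one_pi_of_le (⟨0, by omega⟩ : Fin (r - (s + 1)))
    (Nat.zero_lt_of_lt (hn s)) (hmono s.le_succ)

lemma sum_sub_one_add_SDk_zmod_le (hn : ∀ i, 1 < n i) (hmono : Monotone n) (hks : k + s ≠ 0) :
    ∑ i ∈ Finset.range (s + 1), (n i - 1) + SDk (ZMod (n (s + 1))) (k + s) ≤
      SDk (∀ i : Fin (s + 2), ZMod (n i)) k := by
  have split_last : n s - 1 + SDk (TailSum n (s + 1) (s + 2)) (k + s) ≤
      SDk (TailSum n s (s + 2)) (k + s) := by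
    obtain ⟨k', hk'⟩ := Nat.exists_eq_succ_of_ne_zero hks
    rw [hk']
    exact sub_one_add_SDk_tailSum_le hn (Nat.lt_succ_self _)
      (nonzeroRepresentable_one_tailSum_succ hn hmono (Nat.lt_succ_self _)) k'
  calc ∑ i ∈ Finset.range (s + 1), (n i - 1) + SDk (ZMod (n (s + 1))) (k + s)
      ≤ ∑ i ∈ Finset.range (s + 1), (n i - 1) + SDk (TailSum n (s + 1) (s + 2)) (k + s) := by
        gcongr
        exact SDk_zmod_le_SDk_tailSum hn (Nat.lt_succ_self _) _
    _ ≤ ∑ i ∈ Finset.range s, (n i - 1) + SDk (TailSum n s (s + 2)) (k + s) := by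
        rw [Finset.sum_range_succ, add_assoc]
        gcongr
    _ ≤ SDk (∀ i : Fin (s + 2), ZMod (n i)) k :=
        sum_sub_one_add_SDk_tailSum_le hn (by omega)
          (fun i hi => nonzeroRepresentable_tailSum_succ hn hmono (Or.inl (by omega))) k

end TailSum

lemma sum_fin_ite_lt {M : Type*} [AddCommMonoid M] (f : ℕ → M) {s r : ℕ} (hs : s ≤ r) :
    (∑ i : Fin r, if i.val < s then f i else 0) = ∑ i ∈ Finset.range s, f i := by
  rw [Fin.sum_univ_eq_sum_range (fun i => if i < s then f i else 0), ← Finset.sum_filter]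
  congr 1
  grind

lemma exists_monotone_extension {α : Type*} [Preorder α] {r : ℕ} (hr : 0 < r) {f : Fin r → α}
    (hf : Monotone f) :
    ∃ F : ℕ → α, Monotone F ∧ (∀ j, F j ∈ Set.range f) ∧ f = fun i : Fin r => F i :=
  ⟨fun j => f ⟨min j (r - 1), by omega⟩,
    fun _ _ h => hf (Fin.mk_le_mk.2 (min_le_min_right _ h)), fun _ => Set.mem_range_self _,
    funext fun i => congrArg f (Fin.ext (by simp only; omega))⟩

/-- Proposition (splitting off small components). Indices are zero-based:
for each `s ∈ [0, r−2]`, and also for `s = r−1` in case `n_{r−1} ≠ n_r`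
(one-based), one has
`SD_k(C_{n_1} ⊕ … ⊕ C_{n_r}) ≥ Σ_{i=1}^{s} (n_i − 1) + SD_{k+s}(C_{n_{s+1}} ⊕ … ⊕ C_{n_r})`.
Moreover, if `k + r > 2`, then
`SD_k(C_{n_1} ⊕ … ⊕ C_{n_r}) ≥ Σ_{i=1}^{r−1} (n_i − 1) + SD_{k+r−2}(C_{n_r})`. -/
theorem SDk_split_small_components (r : ℕ) (hr : 2 ≤ r) (n : Fin r → ℕ)
    (hn1 : ∀ i, 1 < n i) (hmono : ∀ i j : Fin r, i ≤ j → n i ≤ n j) (k : ℕ) :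
    (∀ s : ℕ,
      (s ≤ r - 2 ∨ (s = r - 1 ∧ n ⟨r - 2, by omega⟩ ≠ n ⟨r - 1, by omega⟩)) →
      (∑ i : Fin r, if i.val < s then n i - 1 else 0) +
          SDk (∀ i : Fin (r - s),
            ZMod (n ⟨s + i.val, by have h := i.isLt; omega⟩)) (k + s) ≤
        SDk (∀ i : Fin r, ZMod (n i)) k) ∧
    (2 < k + r →
      (∑ i : Fin r, if i.val < r - 1 then n i - 1 else 0) +
          SDk (ZMod (n ⟨r - 1, by omega⟩)) (k + r - 2) ≤
        SDk (∀ i : Fin r, ZMod (n i)) k) := by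
  obtain ⟨N, hN, hrange, rfl⟩ := exists_monotone_extension (by omega) hmono
  have hN1 (i) : 1 < N i := by
    obtain ⟨j, hj⟩ := hrange i
    exact hj ▸ hn1 j
  refine ⟨fun s hs => ?_, fun hkr => ?_⟩
  · rw [sum_fin_ite_lt (fun i => N i - 1) (by omega)]
    refine sum_sub_one_add_SDk_tailSum_le hN1 (by omega) (fun i hi => ?_) k
    refine nonzeroRepresentable_tailSum_succ hN1 hN ?_
    by_cases hir : i + 2 < r
    · exact Or.inl hir
    · obtain rfl : r = i + 2 := by omega
      have hne : N i ≠ N (i + 1) := (hs.resolve_left (by omega)).2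
      exact Or.inr ⟨by omega, (hN i.le_succ).lt_of_ne hne⟩
  · obtain ⟨s, rfl⟩ := Nat.exists_eq_add_of_le' hr
    rw [sum_fin_ite_lt (fun i => N i - 1) (by omega)]
    exact sum_sub_one_add_SDk_zmod_le hN1 hN (by omega)
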